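/- arXiv:1010.5024 — 3 statements merged into one kernel-verified Lean document; each statement's English description precedes it below -/
import Mathlib

section
/- There exists a constant C > 0 such that the following holds: for every ε ∈ (0,1) and every family of real numbers (a_k)_{k ∈ ℤ²∖{0}} for which the right-hand side below is finite, Σ_{k ∈ ℤ², k ≠ 0} |a_k| ≤ C ( ε^{−1/4} ( Σ_{k ≠ 0} (1 + ‖k‖²) a_k² )^{1/2} + e^{−ε^{−1/4}} ( Σ_{k ≠ 0} (1 + ‖k‖²)² a_k² )^{1/2} ), where ‖k‖² = k₁² + k₂². (This is the Fourier-coefficient form of the Brezis–Gallouet-type inequality ‖w‖_{L^∞} ≤ C(‖w‖_{H¹} ε^{−1/4} + ‖w‖_{H²} e^{−1/ε^{1/4}}) on the two-dimensional torus.) -/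
/-!
With `L = ε ^ (-1/4) > 1` and `w k = 1 + ‖k‖²`, the inequality is a single weighted Cauchy–Schwarz
estimate for the weight `m k = L² w k + e^{-2L} (w k)²`: since
`∑ m k a_k² = L² ∑ w k a_k² + e^{-2L} ∑ (w k)² a_k²`, it is enough that `∑ 1 / m k` be bounded
uniformly in `L ≥ 1` (`sum_inv_weight_le`).

To bound that sum, split the lattice into the sup-norm shells `max |k₁| |k₂| = n`, which have `8 n`
points each and on which `w k ≥ n²`. The shells with `n ≤ e^L` contribute at most
`8 L⁻² ∑ 1 / n ≤ 8 L⁻² (1 + L) ≤ 16`, by the first part of the weight; those with `n > e^L`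
contribute at most `8 e^{2L} ∑ n⁻³ ≤ 8 e^L ∑ n⁻² ≤ 16`, by the second part.
-/

open scoped ENNReal

/-- Squared norm of a lattice point. -/
def latNormSq (k : ℤ × ℤ) : ℝ := (k.1 : ℝ) ^ 2 + (k.2 : ℝ) ^ 2

open Finset in
/-- The low shells are bounded by the harmonic sum, which is at most `1 + L`. -/
lemma sum_low_shells_le {L : ℝ} (hL : 1 ≤ L) :
    ∑ n ∈ Icc 1 ⌊Real.exp L⌋₊, 8 / (L ^ 2 * (n : ℝ)) ≤ 16 := by
  have h := harmonic_floor_le_one_add_log (Real.exp L) (Real.one_le_exp (by linarith))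
  rw [Real.log_exp, harmonic_eq_sum_Icc] at h
  push_cast at h
  have hL2 : 0 < L ^ 2 := by positivity
  calc ∑ n ∈ Icc 1 ⌊Real.exp L⌋₊, 8 / (L ^ 2 * (n : ℝ))
      = 8 / L ^ 2 * ∑ n ∈ Icc 1 ⌊Real.exp L⌋₊, (n : ℝ)⁻¹ := by
        rw [mul_sum]
        refine sum_congr rfl fun n _ => ?_
        rw [← div_div, div_eq_mul_inv]
    _ ≤ 8 / L ^ 2 * (1 + L) := by gcongr
    _ ≤ 16 := by
        rw [div_mul_eq_mul_div, div_le_iff₀ hL2]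
        nlinarith

open Finset in
/-- The high shells are bounded by the tail of `∑ n⁻²` beyond `e^L`, which is at most `2 e^{-L}`. -/
lemma sum_high_shells_le (L : ℝ) (M : ℕ) :
    ∑ n ∈ Ioo ⌊Real.exp L⌋₊ M, 8 * Real.exp L / (n : ℝ) ^ 2 ≤ 16 := by
  have h := sum_Ioo_inv_sq_le (α := ℝ) ⌊Real.exp L⌋₊ M
  have hK := Nat.lt_floor_add_one (Real.exp L)
  have hpos := Real.exp_pos L
  calc ∑ n ∈ Ioo ⌊Real.exp L⌋₊ M, 8 * Real.exp L / (n : ℝ) ^ 2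
      = 8 * Real.exp L * ∑ n ∈ Ioo ⌊Real.exp L⌋₊ M, ((n : ℝ) ^ 2)⁻¹ := by
        rw [mul_sum]
        rfl
    _ ≤ 8 * Real.exp L * (2 / (⌊Real.exp L⌋₊ + 1)) := by gcongr
    _ ≤ 8 * Real.exp L * (2 / Real.exp L) := by gcongr
    _ = 16 := by field_simp; norm_num

/-- The Cauchy–Schwarz weight `L² (1 + ‖k‖²) + e^{-2L} (1 + ‖k‖²)²`. -/
noncomputable def bgWeight (L : ℝ) (k : ℤ × ℤ) : ℝ :=
  L ^ 2 * (1 + latNormSq k) + Real.exp (-L) ^ 2 * (1 + latNormSq k) ^ 2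

lemma latNormSq_nonneg (k : ℤ × ℤ) : 0 ≤ latNormSq k := by
  unfold latNormSq; positivity

lemma bgWeight_pos (L : ℝ) (k : ℤ × ℤ) : 0 < bgWeight L k := by
  have := latNormSq_nonneg k
  unfold bgWeight; positivity

lemma sq_supNorm_le_latNormSq (k : ℤ × ℤ) :
    ((max k.1.natAbs k.2.natAbs : ℕ) : ℝ) ^ 2 ≤ latNormSq k := by
  have h (z : ℤ) : ((z.natAbs : ℕ) : ℝ) ^ 2 = (z : ℝ) ^ 2 := by
    rw [Nat.cast_natAbs, Int.cast_abs, sq_abs]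
  unfold latNormSq
  rcases max_choice k.1.natAbs k.2.natAbs with hm | hm <;> rw [hm, h] <;> nlinarith

/-- The factor `8 n` is the number of points of the `n`-th sup-norm shell, so this bounds the
contribution of that shell: by the first part of the weight if `n ≤ e^L`, by the second otherwise.
-/
lemma shell_bound {L : ℝ} (hL : 1 ≤ L) {n : ℕ} (hn : 1 ≤ n) {k : ℤ × ℤ}
    (hk : max k.1.natAbs k.2.natAbs = n) :
    8 * n * (bgWeight L k)⁻¹ ≤
      if n ≤ ⌊Real.exp L⌋₊ then 8 / (L ^ 2 * (n : ℝ)) else 8 * Real.exp L / (n : ℝ) ^ 2 := by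
  have hn0 : (0 : ℝ) < n := by exact_mod_cast hn
  have hw : (n : ℝ) ^ 2 ≤ 1 + latNormSq k := by
    have := sq_supNorm_le_latNormSq k
    rw [hk] at this; linarith
  have hm := bgWeight_pos L k
  rw [← div_eq_mul_inv]
  split_ifs with h
  · have h1 : L ^ 2 * (n : ℝ) ^ 2 ≤ bgWeight L k := by
      unfold bgWeight
      have : L ^ 2 * (n : ℝ) ^ 2 ≤ L ^ 2 * (1 + latNormSq k) := by gcongr
      have : 0 ≤ Real.exp (-L) ^ 2 * (1 + latNormSq k) ^ 2 := by positivity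
      linarith
    rw [div_le_div_iff₀ hm (by positivity)]
    nlinarith
  · have hexp : Real.exp L ≤ n := ((Nat.floor_lt (Real.exp_pos L).le).1 (not_le.1 h)).le
    have h1 : Real.exp (-L) ^ 2 * ((n : ℝ) ^ 2) ^ 2 ≤ bgWeight L k := by
      unfold bgWeight
      have : Real.exp (-L) ^ 2 * ((n : ℝ) ^ 2) ^ 2 ≤
        Real.exp (-L) ^ 2 * (1 + latNormSq k) ^ 2 := by gcongr
      have : 0 ≤ L ^ 2 * (1 + latNormSq k) := by
        have := latNormSq_nonneg k
        positivity
      linarith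
    have hp := Real.exp_pos L
    have h2 : (n : ℝ) ^ 3 ≤ Real.exp L * bgWeight L k := by
      calc (n : ℝ) ^ 3 = (Real.exp L)⁻¹ * (Real.exp L * (n : ℝ) ^ 3) := by field_simp
        _ ≤ (Real.exp L)⁻¹ * (n * (n : ℝ) ^ 3) := by gcongr
        _ = Real.exp L * (Real.exp (-L) ^ 2 * ((n : ℝ) ^ 2) ^ 2) := by
          rw [Real.exp_neg]; field_simp
        _ ≤ _ := by gcongr
    rw [div_le_div_iff₀ hm (by positivity)]
    nlinarith

open Finset in
lemma sum_inv_weight_le {L : ℝ} (hL : 1 ≤ L) (s : Finset {k : ℤ × ℤ // k ≠ 0}) :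
    ∑ k ∈ s, (bgWeight L k.1)⁻¹ ≤ 32 := by
  classical
  let g : {k : ℤ × ℤ // k ≠ 0} → ℕ := fun k => max k.1.1.natAbs k.1.2.natAbs
  let c : ℕ → ℝ := fun n =>
    if n ≤ ⌊Real.exp L⌋₊ then 8 / (L ^ 2 * (n : ℝ)) else 8 * Real.exp L / (n : ℝ) ^ 2
  have hc (n : ℕ) : 0 ≤ c n := by
    simp only [c]; split_ifs <;> positivity
  let K := ⌊Real.exp L⌋₊
  obtain ⟨M, hM⟩ : ∃ M, ∀ k ∈ s, g k < M :=
    ⟨s.sup g + 1, fun k hk => Nat.lt_succ_of_le (le_sup hk)⟩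
  have hg (k : {k : ℤ × ℤ // k ≠ 0}) : 1 ≤ g k := by
    by_contra h
    apply k.2
    simp only [g] at h
    ext <;> simp <;> omega
  have hmaps : ∀ k ∈ s, g k ∈ Icc 1 K ∪ Ioo K M := by
    intro k hk
    have h1 := hg k
    have h2 := hM k hk
    simp only [mem_union, mem_Icc, mem_Ioo]
    omega
  have hfib : ∀ n ∈ Icc 1 K ∪ Ioo K M, ∑ k ∈ s with g k = n, (bgWeight L k.1)⁻¹ ≤ c n := by
    intro n hn
    have hn1 : 1 ≤ n := by
      simp only [mem_union, mem_Icc, mem_Ioo] at hn; omega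
    have hn0 : (0 : ℝ) < n := by exact_mod_cast hn1
    have hcard : #{k ∈ s | g k = n} ≤ 8 * n := by
      rw [← Int.card_box (by omega : n ≠ 0)]
      refine card_le_card_of_injOn Subtype.val ?_ Subtype.val_injective.injOn
      intro k hk
      simpa [Int.mem_box, g] using (mem_filter.1 hk).2
    have hpt : ∀ k ∈ s.filter (g · = n), (bgWeight L k.1)⁻¹ ≤ c n / (8 * n) := by
      intro k hk
      rw [le_div_iff₀ (by positivity), mul_comm]
      exact shell_bound hL hn1 (mem_filter.1 hk).2
    calc _ ≤ #{k ∈ s | g k = n} • (c n / (8 * n)) := sum_le_card_nsmul _ _ _ hpt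
      _ = #{k ∈ s | g k = n} * (c n / (8 * n)) := nsmul_eq_mul _ _
      _ ≤ ((8 * n : ℕ) : ℝ) * (c n / (8 * n)) := by
          have := hc n
          gcongr
      _ = c n := by push_cast; field_simp
  have hlow : ∑ n ∈ Icc 1 K, c n ≤ 16 := by
    refine le_trans (le_of_eq (sum_congr rfl fun n hn => ?_)) (sum_low_shells_le hL)
    exact if_pos (mem_Icc.1 hn).2
  have hhigh : ∑ n ∈ Ioo K M, c n ≤ 16 := by
    refine le_trans (le_of_eq (sum_congr rfl fun n hn => ?_)) (sum_high_shells_le L M)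
    exact if_neg (not_le.2 (mem_Ioo.1 hn).1)
  have hdisj : Disjoint (Icc 1 K) (Ioo K M) := by
    rw [disjoint_left]
    intro n h1 h2
    simp only [mem_Icc, mem_Ioo] at h1 h2
    omega
  calc ∑ k ∈ s, (bgWeight L k.1)⁻¹
      = ∑ n ∈ Icc 1 K ∪ Ioo K M, ∑ k ∈ s with g k = n, (bgWeight L k.1)⁻¹ :=
        (sum_fiberwise_of_maps_to hmaps _).symm
    _ ≤ ∑ n ∈ Icc 1 K ∪ Ioo K M, c n := sum_le_sum hfib
    _ = ∑ n ∈ Icc 1 K, c n + ∑ n ∈ Ioo K M, c n := sum_union hdisj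
    _ ≤ 32 := by linarith

/-- The inequality for finitely many coefficients. The constant comes from `32 ≤ 6 ^ 2`. -/
lemma finite_brezis_gallouet {L : ℝ} (hL : 1 ≤ L) (a : ℤ × ℤ → ℝ)
    (s : Finset {k : ℤ × ℤ // k ≠ 0}) :
    ∑ k ∈ s, |a k.1| ≤
      6 * (L * √(∑ k ∈ s, (1 + latNormSq k.1) * (a k.1) ^ 2)
        + Real.exp (-L) * √(∑ k ∈ s, (1 + latNormSq k.1) ^ 2 * (a k.1) ^ 2)) := by
  set A := ∑ k ∈ s, (1 + latNormSq k.1) * (a k.1) ^ 2 with hA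
  set B := ∑ k ∈ s, (1 + latNormSq k.1) ^ 2 * (a k.1) ^ 2 with hB
  have hA0 : 0 ≤ A := Finset.sum_nonneg fun k _ => by
    have := latNormSq_nonneg k.1
    positivity
  have hB0 : 0 ≤ B := Finset.sum_nonneg fun k _ => by positivity
  have hCS : (∑ k ∈ s, |a k.1|) ^ 2 ≤
      (∑ k ∈ s, (bgWeight L k.1)⁻¹) * ∑ k ∈ s, bgWeight L k.1 * (a k.1) ^ 2 := by
    refine Finset.sum_sq_le_sum_mul_sum_of_sq_le_mul s
      (fun k _ => (inv_pos.2 (bgWeight_pos L k.1)).le)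
      (fun k _ => mul_nonneg (bgWeight_pos L k.1).le (sq_nonneg _)) fun k _ => ?_
    exact (by rw [sq_abs, inv_mul_cancel_left₀ (bgWeight_pos L k.1).ne'] :
      |a k.1| ^ 2 = _).le
  have hsum : ∑ k ∈ s, bgWeight L k.1 * (a k.1) ^ 2 = L ^ 2 * A + Real.exp (-L) ^ 2 * B := by
    rw [hA, hB, Finset.mul_sum, Finset.mul_sum, ← Finset.sum_add_distrib]
    refine Finset.sum_congr rfl fun k _ => ?_
    unfold bgWeight; ring
  rw [hsum] at hCS
  have hE := Real.exp_pos (-L)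
  refine le_of_abs_le (abs_le_of_sq_le_sq ?_ (by positivity))
  calc _ ≤ _ := hCS
    _ ≤ 32 * (L ^ 2 * A + Real.exp (-L) ^ 2 * B) := by
        gcongr
        exact sum_inv_weight_le hL s
    _ = 32 * ((L * √A) ^ 2 + (Real.exp (-L) * √B) ^ 2) := by
        rw [mul_pow, mul_pow, Real.sq_sqrt hA0, Real.sq_sqrt hB0]
    _ ≤ _ := by
        have h1 : 0 ≤ L * √A := by positivity
        have h2 : 0 ≤ Real.exp (-L) * √B := by positivity
        nlinarith [mul_nonneg h1 h2, sq_nonneg (L * √A), sq_nonneg (Real.exp (-L) * √B)]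

lemma ofReal_sqrt_sum_le {ι : Type*} (s : Finset ι) {f : ι → ℝ} (hf : ∀ i, 0 ≤ f i) :
    ENNReal.ofReal √(∑ i ∈ s, f i) ≤ (∑' i, ENNReal.ofReal (f i)) ^ ((1 : ℝ) / 2) := by
  rw [Real.sqrt_eq_rpow, ← ENNReal.ofReal_rpow_of_nonneg (Finset.sum_nonneg fun i _ => hf i)
    (by norm_num), ENNReal.ofReal_sum_of_nonneg fun i _ => hf i]
  exact ENNReal.rpow_le_rpow (ENNReal.sum_le_tsum s) (by norm_num)

theorem stmt4 :
    ∃ C : ℝ, 0 < C ∧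
      ∀ (ε : ℝ), ε ∈ Set.Ioo (0 : ℝ) 1 →
        ∀ a : ℤ × ℤ → ℝ,
          (∑' k : {k : ℤ × ℤ // k ≠ 0},
              ENNReal.ofReal ((1 + latNormSq k.1) * (a k.1) ^ 2)) ≠ ⊤ →
          (∑' k : {k : ℤ × ℤ // k ≠ 0},
              ENNReal.ofReal ((1 + latNormSq k.1) ^ 2 * (a k.1) ^ 2)) ≠ ⊤ →
          (∑' k : {k : ℤ × ℤ // k ≠ 0}, ENNReal.ofReal |a k.1|)
            ≤ ENNReal.ofReal C *
              (ENNReal.ofReal (ε ^ (-(1 / 4) : ℝ)) *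
                  (∑' k : {k : ℤ × ℤ // k ≠ 0},
                    ENNReal.ofReal ((1 + latNormSq k.1) * (a k.1) ^ 2)) ^ ((1 : ℝ) / 2)
                + ENNReal.ofReal (Real.exp (-(ε ^ (-(1 / 4) : ℝ)))) *
                  (∑' k : {k : ℤ × ℤ // k ≠ 0},
                    ENNReal.ofReal ((1 + latNormSq k.1) ^ 2 * (a k.1) ^ 2)) ^ ((1 : ℝ) / 2)) := by
  refine ⟨6, by norm_num, fun ε hε a _ _ => ?_⟩
  have hL : 1 ≤ ε ^ (-(1 / 4) : ℝ) :=
    Real.one_le_rpow_of_pos_of_le_one_of_nonpos hε.1 hε.2.le (by norm_num)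
  set L := ε ^ (-(1 / 4) : ℝ)
  rw [ENNReal.tsum_eq_iSup_sum]
  refine iSup_le fun s => ?_
  rw [← ENNReal.ofReal_sum_of_nonneg fun k _ => abs_nonneg _]
  refine (ENNReal.ofReal_le_ofReal (finite_brezis_gallouet hL a s)).trans ?_
  rw [ENNReal.ofReal_mul (by norm_num), ENNReal.ofReal_add (by positivity) (by positivity),
    ENNReal.ofReal_mul (by positivity), ENNReal.ofReal_mul (Real.exp_pos _).le]
  gcongr
  · exact ofReal_sqrt_sum_le s fun k => mul_nonneg
      (by linarith [latNormSq_nonneg k.1]) (sq_nonneg _)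
  · exact ofReal_sqrt_sum_le s fun k => by positivity
end

section
/- Let u : ℝ² → ℝ² be a smooth ℤ²-periodic divergence-free vector field (∂₁u¹ + ∂₂u² = 0). Then ∫_Q (u·∇u)·Δu dx = 0, where Q = [0,1]², (u·∇u)ⁱ = Σ_j uʲ ∂_j uⁱ, and (Δu)ⁱ = ∂₁²uⁱ + ∂₂²uⁱ. (This is the two-dimensional periodic orthogonality identity (B(u,u), Au) = 0 used for the H¹ energy estimate.) -/
/-!
The integrand is pointwise the divergence of a smooth periodic field, so its integral over the
period cell vanishes by the divergence theorem (opposite faces cancel).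

Write `N i = ∑ j, u j * ∂_j u i`. The field is `G k = ∑ i, N i * ∂_k u i - u k * |∇u|² / 2`.
Differentiating, `div G = N · Δu + ∑ i j k, ∂_k u j * ∂_j u i * ∂_k u i - (div u) * |∇u|² / 2`, where
the other terms with second derivatives cancel, as these are symmetric. With
`A i j = ∂_j u i`, the cubic sum is `tr (A² Aᵀ)`; as `A` is a traceless `2 × 2` matrix,
Cayley-Hamilton gives `A² = -det A • 1`, and the sum is `-det A * tr A = 0`.
The periodic divergence theorem is `integral_div_periodic`, and the pointwise identity is proved
inside `stmt7`.
-/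

open MeasureTheory

/-- Partial derivative in direction `j`. -/
noncomputable def pd (j : Fin 2) (f : (Fin 2 → ℝ) → ℝ) (x : Fin 2 → ℝ) : ℝ :=
  fderiv ℝ f x (Pi.single j 1)

/-- `f` is `ℤ²`-periodic. -/
def Periodic2 (f : (Fin 2 → ℝ) → ℝ) : Prop :=
  ∀ (x : Fin 2 → ℝ) (k : Fin 2 → ℤ), f (x + fun i => (k i : ℝ)) = f x

/-- The fundamental domain `Q = [0,1]²`. -/
def Q2 : Set (Fin 2 → ℝ) := Set.Icc 0 1

lemma pd_contDiff {f : (Fin 2 → ℝ) → ℝ} (hf : ContDiff ℝ (⊤ : ℕ∞) f) (j : Fin 2) :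
    ContDiff ℝ (⊤ : ℕ∞) (pd j f) := by
  unfold pd
  exact (hf.fderiv_right (m := (⊤ : ℕ∞)) (by simp)).clm_apply contDiff_const

lemma pd_periodic {f : (Fin 2 → ℝ) → ℝ} (hf : Periodic2 f) (j : Fin 2) :
    Periodic2 (pd j f) := by
  intro x k
  unfold pd
  rw [← fderiv_comp_add_right]
  simp only [hf _ k]

lemma smooth_differentiableAt {f : (Fin 2 → ℝ) → ℝ} (hf : ContDiff ℝ (⊤ : ℕ∞) f)
    (x : Fin 2 → ℝ) : DifferentiableAt ℝ f x :=
  hf.differentiable (by simp) x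

lemma pd_add {f g : (Fin 2 → ℝ) → ℝ} (hf : ContDiff ℝ (⊤ : ℕ∞) f)
    (hg : ContDiff ℝ (⊤ : ℕ∞) g) (j : Fin 2) (x : Fin 2 → ℝ) :
    pd j (fun y => f y + g y) x = pd j f x + pd j g x := by
  unfold pd
  rw [fderiv_fun_add (smooth_differentiableAt hf x) (smooth_differentiableAt hg x)]
  simp

lemma pd_sub {f g : (Fin 2 → ℝ) → ℝ} (hf : ContDiff ℝ (⊤ : ℕ∞) f)
    (hg : ContDiff ℝ (⊤ : ℕ∞) g) (j : Fin 2) (x : Fin 2 → ℝ) :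
    pd j (fun y => f y - g y) x = pd j f x - pd j g x := by
  unfold pd
  rw [fderiv_fun_sub (smooth_differentiableAt hf x) (smooth_differentiableAt hg x)]
  simp

lemma pd_mul {f g : (Fin 2 → ℝ) → ℝ} (hf : ContDiff ℝ (⊤ : ℕ∞) f)
    (hg : ContDiff ℝ (⊤ : ℕ∞) g) (j : Fin 2) (x : Fin 2 → ℝ) :
    pd j (fun y => f y * g y) x = f x * pd j g x + g x * pd j f x := by
  unfold pd
  rw [fderiv_fun_mul (smooth_differentiableAt hf x) (smooth_differentiableAt hg x)]
  simp

lemma pd_const (c : ℝ) (j : Fin 2) (x : Fin 2 → ℝ) :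
    pd j (fun _ => c) x = 0 := by
  simp [pd]

lemma pd_comm {f : (Fin 2 → ℝ) → ℝ} (hf : ContDiff ℝ (⊤ : ℕ∞) f) (i j : Fin 2)
    (x : Fin 2 → ℝ) : pd i (pd j f) x = pd j (pd i f) x := by
  have hd : DifferentiableAt ℝ (fderiv ℝ f) x :=
    (hf.fderiv_right (m := (⊤ : ℕ∞)) (by simp)).differentiable (by simp) x
  have key : ∀ v w : Fin 2 → ℝ,
      fderiv ℝ (fun y => fderiv ℝ f y v) x w = fderiv ℝ (fderiv ℝ f) x w v := by
    intro v w
    rw [fderiv_clm_apply hd (differentiableAt_const v)]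
    simp
  have hs : IsSymmSndFDerivAt ℝ f x := hf.contDiffAt.isSymmSndFDerivAt (by
    rw [minSmoothness_of_isRCLikeNormedField]
    exact WithTop.coe_le_coe.2 (le_top : (2 : ℕ∞) ≤ ⊤))
  change fderiv ℝ (fun y => fderiv ℝ f y (Pi.single j 1)) x (Pi.single i 1)
    = fderiv ℝ (fun y => fderiv ℝ f y (Pi.single i 1)) x (Pi.single j 1)
  rw [key, key]
  exact hs.eq _ _

lemma integral_div_periodic (G : Fin 2 → (Fin 2 → ℝ) → ℝ)
    (hG : ∀ k, ContDiff ℝ (⊤ : ℕ∞) (G k)) (hp : ∀ k, Periodic2 (G k)) :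
    ∫ x in Q2, ∑ k, pd k (G k) x = 0 := by
  have hcont : Continuous fun x => ∑ k, pd k (G k) x :=
    continuous_finsetSum _ fun k _ => (pd_contDiff (hG k) k).continuous
  have h := integral_divergence_of_hasFDerivAt_off_countable' (n := 1) (E := ℝ)
    (a := (0 : Fin 2 → ℝ)) (b := 1) zero_le_one G (fun k x => fderiv ℝ (G k) x) ∅
    Set.countable_empty (fun k => (hG k).continuous.continuousOn)
    (fun x _ k => (smooth_differentiableAt (hG k) x).hasFDerivAt)
    (hcont.continuousOn.integrableOn_compact isCompact_Icc)
  refine h.trans (Finset.sum_eq_zero fun k _ => ?_)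
  rw [sub_eq_zero]
  congr 1
  funext y
  have h1 := hp k (k.insertNth 0 y) (Pi.single k 1)
  rw [Pi.zero_apply, Pi.one_apply, ← h1]
  congr 1
  funext i
  refine Fin.succAboveCases k ?_ (fun m => ?_) i <;> simp

theorem stmt7
    (u : (Fin 2 → ℝ) → (Fin 2 → ℝ))
    (hu : ContDiff ℝ (⊤ : ℕ∞) u)
    (hp : ∀ i, Periodic2 (fun x => u x i))
    (hdiv : ∀ x, ∑ j : Fin 2, pd j (fun y => u y j) x = 0) :
    (∫ x in Q2, ∑ i : Fin 2,
        (∑ j : Fin 2, u x j * pd j (fun y => u y i) x)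
          * (∑ j : Fin 2, pd j (pd j (fun y => u y i)) x)) = 0 := by
  have hs : ∀ i, ContDiff ℝ (⊤ : ℕ∞) (fun x => u x i) := fun i => contDiff_pi.1 hu i
  obtain ⟨a, ha⟩ : ∃ a, a = fun x => u x 0 := ⟨_, rfl⟩
  obtain ⟨b, hb⟩ : ∃ b, b = fun x => u x 1 := ⟨_, rfl⟩
  have ea : ∀ x, u x 0 = a x := fun x => by rw [ha]
  have eb : ∀ x, u x 1 = b x := fun x => by rw [hb]
  have sa := hs 0
  have sb := hs 1
  have pa := hp 0
  have pb := hp 1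
  simp only [Fin.sum_univ_two, ea, eb] at sa sb pa pb hdiv ⊢
  have sa' := pd_contDiff sa
  have sb' := pd_contDiff sb
  -- `G k = ∑ i, (u·∇u) i * ∂_k u i - u k * |∇u|² / 2`, with `u = (a, b)`.
  let G : Fin 2 → (Fin 2 → ℝ) → ℝ := fun k x =>
    (a x * pd 0 a x + b x * pd 1 a x) * pd k a x
      + (a x * pd 0 b x + b x * pd 1 b x) * pd k b x
      - (![a, b] k x) * ((1 / 2) * (pd 0 a x * pd 0 a x + pd 1 a x * pd 1 a x
        + pd 0 b x * pd 0 b x + pd 1 b x * pd 1 b x))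
  have sab : ∀ k, ContDiff ℝ (⊤ : ℕ∞) (![a, b] k) := by
    intro k; fin_cases k <;> assumption
  have pab : ∀ k, Periodic2 (![a, b] k) := by
    intro k; fin_cases k <;> assumption
  have hG : ∀ k, ContDiff ℝ (⊤ : ℕ∞) (G k) := by
    intro k
    have := sab k
    have := sa' 0
    have := sa' 1
    have := sb' 0
    have := sb' 1
    have := sa' k
    have := sb' k
    fun_prop
  have hGp : ∀ k, Periodic2 (G k) := by
    intro k x m
    simp only [G, pa x m, pb x m, pab k x m, pd_periodic pa _ x m, pd_periodic pb _ x m]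
  rw [← integral_div_periodic G hG hGp]
  congr 1
  funext x
  have hd : pd 1 b x = - pd 0 a x := by linarith [hdiv x]
  have s00 := sa' 0
  have s01 := sa' 1
  have s10 := sb' 0
  have s11 := sb' 1
  simp only [Fin.sum_univ_two, G, Matrix.cons_val_zero, Matrix.cons_val_one]
  simp (disch := fun_prop) only [pd_add, pd_sub, pd_mul, pd_const]
  rw [pd_comm sa 1 0, pd_comm sb 1 0, hd]
  ring
end

section
/- Let T > 0 and ν > 0. Let u : ℝ² × [0,T] → ℝ², θ : ℝ² × [0,T] → ℝ, and p : ℝ² × [0,T] → ℝ be smooth functions, ℤ²-periodic in x, such that for every t the field u(·,t) is divergence-free, and pointwise on ℝ² × [0,T]: ∂_t u + (u·∇)u = ν Δu − ∇p + θ e₂ and ∂_t θ + u·∇θ = 0, where e₂ = (0,1). Then for every t ∈ [0,T]: ‖∇u(t)‖_{L²}² + ν ∫₀ᵗ ‖Δu(s)‖_{L²}² ds ≤ ‖∇u(0)‖_{L²}² + (t/ν) ‖θ(0)‖_{L²}², where all norms are over Q = [0,1]². -/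
/-!
The proof is the classical enstrophy estimate. For a solution, `∂ₜ|∇u|²` equals a spatial divergence
plus `-2 Δu · (∂ₜu + (u·∇)u + ∇p)` (`dt_gradSq`); here the pressure drops out because
`div Δu = 0`, and the nonlinearity drops out because, in two dimensions, the cubic term
`tr (A² Aᵀ)` with `A = ∇u` vanishes for trace-free `A`. Divergences of periodic fields integrate to
zero over the cell (`integral_div_eq_zero`), so inserting the momentum equation and using Young's
inequality gives `d/dt ‖∇u‖² ≤ -ν ‖Δu‖² + ν⁻¹ ‖θ‖²`. The transport equation conserves `‖θ‖²`
(`dt_sq_eq_div`), and integration in time (`integral_slice_sub`) yields the claim.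

All fields are treated as functions on space-time, smooth and periodic in space (`SmoothPer`), a
class closed under products and directional derivatives `dd`.
-/


open MeasureTheory

/-- Laplacian of a scalar function. -/
noncomputable def lap (f : (Fin 2 → ℝ) → ℝ) (x : Fin 2 → ℝ) : ℝ :=
  ∑ j : Fin 2, pd j (pd j f) x

/-- Standard basis vector `e₂ = (0,1)`. -/
noncomputable def e2 (i : Fin 2) : ℝ := if i = 1 then 1 else 0

/-! ### Smooth space-time functions, periodic in space -/

/-- Space-time `ℝ × ℝ²`; the first component is the time. -/
abbrev SpaceTime : Type := ℝ × (Fin 2 → ℝ)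

/-- Directional derivative of a space-time function along the constant vector `v`. -/
noncomputable def dd (v : SpaceTime) (F : SpaceTime → ℝ) (q : SpaceTime) : ℝ :=
  fderiv ℝ F q v

/-- The unit vector of the time direction. -/
def et : SpaceTime := (1, 0)

/-- The unit vector of the `j`-th space direction. -/
def ex (j : Fin 2) : SpaceTime := (0, Pi.single j 1)

/-- Smooth space-time functions that are `ℤ²`-periodic in space. -/
structure SmoothPer (F : SpaceTime → ℝ) : Prop where
  smooth : ContDiff ℝ (⊤ : ℕ∞) F
  per : ∀ t, Periodic2 (fun x => F (t, x))

namespace SmoothPer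

variable {F G : SpaceTime → ℝ}

theorem differentiable (hF : SmoothPer F) : Differentiable ℝ F :=
  hF.smooth.differentiable (by simp)

theorem continuous (hF : SmoothPer F) : Continuous F := hF.smooth.continuous

theorem continuous_slice (hF : SmoothPer F) (t : ℝ) : Continuous (fun x => F (t, x)) :=
  hF.continuous.comp (by fun_prop)

theorem add (hF : SmoothPer F) (hG : SmoothPer G) : SmoothPer (fun q => F q + G q) :=
  ⟨hF.smooth.add hG.smooth, fun t x k => by
    have h1 := hF.per t x k
    have h2 := hG.per t x k
    simp only at h1 h2 ⊢
    rw [h1, h2]⟩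

theorem mul (hF : SmoothPer F) (hG : SmoothPer G) : SmoothPer (fun q => F q * G q) :=
  ⟨hF.smooth.mul hG.smooth, fun t x k => by
    have h1 := hF.per t x k
    have h2 := hG.per t x k
    simp only at h1 h2 ⊢
    rw [h1, h2]⟩

theorem const (c : ℝ) : SmoothPer (fun _ => c) := ⟨contDiff_const, fun _ _ _ => rfl⟩

theorem sum {H : Fin 2 → SpaceTime → ℝ} (hH : ∀ i, SmoothPer (H i)) :
    SmoothPer (fun q => ∑ i, H i q) := by
  simpa only [Fin.sum_univ_two] using (hH 0).add (hH 1)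

theorem dd (hF : SmoothPer F) (v : SpaceTime) : SmoothPer (dd v F) := by
  refine ⟨(hF.smooth.fderiv_right (m := (⊤ : ℕ∞)) (by simp)).clm_apply contDiff_const, ?_⟩
  intro t x k
  have hshift : (fun q : SpaceTime => F (q + (0, fun i => (k i : ℝ)))) = F := by
    funext q
    have := hF.per q.1 q.2 k
    simpa [Prod.add_def] using this
  have h := fderiv_comp_add_right (𝕜 := ℝ) (f := F) (x := (t, x)) (0, fun i => (k i : ℝ))
  rw [hshift] at h
  simp only [_root_.dd]
  rw [h]
  simp

end SmoothPer

section Calculus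

variable {F G : SpaceTime → ℝ}

theorem dd_add (hF : SmoothPer F) (hG : SmoothPer G) (v q : SpaceTime) :
    dd v (fun q => F q + G q) q = dd v F q + dd v G q := by
  simp only [dd]
  rw [fderiv_fun_add (hF.differentiable q) (hG.differentiable q)]
  simp

theorem dd_mul (hF : SmoothPer F) (hG : SmoothPer G) (v q : SpaceTime) :
    dd v (fun q => F q * G q) q = dd v F q * G q + F q * dd v G q := by
  simp only [dd]
  rw [fderiv_fun_mul (hF.differentiable q) (hG.differentiable q)]
  simp
  ring

theorem dd_const (c : ℝ) (v q : SpaceTime) : dd v (fun _ => c) q = 0 := by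
  simp [dd]

theorem dd_sum {H : Fin 2 → SpaceTime → ℝ} (hH : ∀ i, SmoothPer (H i)) (v q : SpaceTime) :
    dd v (fun q => ∑ i, H i q) q = ∑ i, dd v (H i) q := by
  simp only [Fin.sum_univ_two]
  exact dd_add (hH 0) (hH 1) v q

theorem dd_sq (hF : SmoothPer F) (v q : SpaceTime) :
    dd v (fun q => F q ^ 2) q = 2 * (F q * dd v F q) := by
  simp only [pow_two]
  rw [dd_mul hF hF]
  ring

theorem SmoothPer.sq (hF : SmoothPer F) : SmoothPer (fun q => F q ^ 2) := by
  simpa only [pow_two] using hF.mul hF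

theorem dd_comm (hF : SmoothPer F) (v w : SpaceTime) : dd v (dd w F) = dd w (dd v F) := by
  funext q
  have hsymm : IsSymmSndFDerivAt ℝ F q :=
    hF.smooth.contDiffAt.isSymmSndFDerivAt (by simpa using WithTop.coe_le_coe.2 (le_top : (2 : ℕ∞) ≤ ⊤))
  have hd : DifferentiableAt ℝ (fderiv ℝ F) q :=
    ((hF.smooth.fderiv_right (m := (⊤ : ℕ∞)) (by simp)).differentiable (by simp)) q
  have key : ∀ a b : SpaceTime, dd a (dd b F) q = fderiv ℝ (fderiv ℝ F) q a b := by
    intro a b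
    change fderiv ℝ (fun y => fderiv ℝ F y b) q a = _
    rw [fderiv_clm_apply hd (differentiableAt_const b)]
    simp
  rw [key, key]
  exact hsymm v w

theorem hasFDerivAt_slice (hF : SmoothPer F) (t : ℝ) (x : Fin 2 → ℝ) :
    HasFDerivAt (fun y => F (t, y))
      ((fderiv ℝ F (t, x)).comp (ContinuousLinearMap.inr ℝ ℝ (Fin 2 → ℝ))) x :=
  (hF.differentiable (t, x)).hasFDerivAt.comp x (hasFDerivAt_prodMk_right t x)

theorem pd_slice (hF : SmoothPer F) (j : Fin 2) (t : ℝ) (x : Fin 2 → ℝ) :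
    pd j (fun y => F (t, y)) x = dd (ex j) F (t, x) := by
  rw [pd, (hasFDerivAt_slice hF t x).fderiv]
  simp [dd, ex]

theorem hasDerivAt_time (hF : SmoothPer F) (t : ℝ) (x : Fin 2 → ℝ) :
    HasDerivAt (fun s => F (s, x)) (dd et F (t, x)) t := by
  have h : HasFDerivAt (fun s => F (s, x))
      ((fderiv ℝ F (t, x)).comp (ContinuousLinearMap.inl ℝ ℝ (Fin 2 → ℝ))) t :=
    (hF.differentiable (t, x)).hasFDerivAt.comp t (hasFDerivAt_prodMk_left (𝕜 := ℝ) t x)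
  simpa [dd, et] using h.hasDerivAt

theorem lap_slice (hF : SmoothPer F) (t : ℝ) (x : Fin 2 → ℝ) :
    lap (fun y => F (t, y)) x = ∑ j, dd (ex j) (dd (ex j) F) (t, x) := by
  simp only [lap]
  refine Finset.sum_congr rfl fun j _ => ?_
  rw [← pd_slice (hF.dd _)]
  congr 1
  funext y
  exact pd_slice hF j t y

end Calculus

/-! ### Integration over the period cell and in time -/

theorem integrableOn_Q2 {f : (Fin 2 → ℝ) → ℝ} (hf : Continuous f) : IntegrableOn f Q2 :=
  hf.integrableOn_Icc

/-- The divergence of a periodic field integrates to zero over the period cell: the contributions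
of opposite faces cancel in the divergence theorem. -/
theorem integral_div_eq_zero {G : Fin 2 → SpaceTime → ℝ} (hG : ∀ j, SmoothPer (G j)) (t : ℝ) :
    ∫ x in Q2, ∑ j, dd (ex j) (G j) (t, x) = 0 := by
  have hint : IntegrableOn (fun x => ∑ j, dd (ex j) (G j) (t, x)) Q2 :=
    integrableOn_Q2 (continuous_finsetSum _ fun j _ => ((hG j).dd _).continuous_slice t)
  have h := integral_divergence_of_hasFDerivAt_off_countable' (0 : Fin 2 → ℝ) 1 zero_le_one
    (fun j x => G j (t, x))
    (fun j x => (fderiv ℝ (G j) (t, x)).comp (ContinuousLinearMap.inr ℝ ℝ (Fin 2 → ℝ)))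
    ∅ Set.countable_empty
    (fun j => ((hG j).continuous_slice t).continuousOn)
    (fun x _ j => hasFDerivAt_slice (hG j) t x)
    (by simpa [dd, ex, Q2] using hint)
  have h0 : ∀ j : Fin 2, ∀ y : Fin 1 → ℝ,
      G j (t, Fin.insertNth j ((1 : Fin 2 → ℝ) j) y)
        = G j (t, Fin.insertNth j ((0 : Fin 2 → ℝ) j) y) := by
    intro j y
    have hp := (hG j).per t (Fin.insertNth j ((0 : Fin 2 → ℝ) j) y) (Pi.single j 1)
    simp only at hp
    rw [← hp]
    congr 2
    funext i
    refine Fin.succAboveCases j ?_ (fun l => ?_) i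
    · simp
    · simp
  simp only [h0, sub_self, Finset.sum_const_zero] at h
  simpa [dd, ex, Q2] using h

theorem continuous_integral_slice {F : SpaceTime → ℝ} (hF : SmoothPer F) :
    Continuous fun t => ∫ x in Q2, F (t, x) :=
  continuous_parametric_integral_of_continuous (f := fun t x => F (t, x))
    hF.continuous isCompact_Icc

/-- Fundamental theorem of calculus for the time-dependent spatial integral, by Fubini. -/
theorem integral_slice_sub {F : SpaceTime → ℝ} (hF : SmoothPer F) {t : ℝ} (ht : 0 ≤ t) :
    (∫ x in Q2, F (t, x)) - ∫ x in Q2, F (0, x)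
      = ∫ s in (0 : ℝ)..t, ∫ x in Q2, dd et F (s, x) := by
  have hc := (hF.dd et).continuous
  rw [intervalIntegral.integral_of_le ht, integral_integral_swap, ← integral_sub
    (integrableOn_Q2 (hF.continuous_slice t)) (integrableOn_Q2 (hF.continuous_slice 0))]
  · refine integral_congr_ae (Filter.Eventually.of_forall fun x => ?_)
    simp only
    rw [← intervalIntegral.integral_of_le ht]
    refine (intervalIntegral.integral_eq_sub_of_hasDerivAt
      (fun s _ => hasDerivAt_time hF s x) ?_).symm
    exact Continuous.intervalIntegrable (hc.comp (by fun_prop)) _ _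
  · rw [Measure.prod_restrict]
    have h1 : IntegrableOn (dd et F) (Set.Icc (0 : ℝ) t ×ˢ Q2) (volume.prod volume) :=
      hc.continuousOn.integrableOn_compact (isCompact_Icc.prod isCompact_Icc)
    exact h1.mono_set (Set.prod_mono Set.Ioc_subset_Icc_self subset_rfl)

/-! ### Pointwise balance laws -/

/-- Pointwise transport identity: for divergence-free `U` the square of a transported scalar
changes by an exact divergence. -/
theorem dt_sq_eq_div {U : Fin 2 → SpaceTime → ℝ} {θ : SpaceTime → ℝ}
    (hU : ∀ i, SmoothPer (U i)) (hθ : SmoothPer θ) (q : SpaceTime)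
    (hdiv : ∑ j, dd (ex j) (U j) q = 0)
    (hq : dd et θ q + ∑ j, U j q * dd (ex j) θ q = 0) :
    dd et (fun q => θ q ^ 2) q
      = ∑ j, dd (ex j) (fun q => (-1) * (U j q * θ q ^ 2)) q := by
  have h : ∀ j, dd (ex j) (fun q => (-1) * (U j q * θ q ^ 2)) q
      = -(dd (ex j) (U j) q * θ q ^ 2 + U j q * (2 * (θ q * dd (ex j) θ q))) := by
    intro j
    rw [dd_mul (.const _) ((hU j).mul hθ.sq), dd_mul (hU j) hθ.sq, dd_sq hθ, dd_const]
    ring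
  simp only [h, dd_sq hθ, Fin.sum_univ_two] at hdiv hq ⊢
  linear_combination 2 * θ q * hq + θ q ^ 2 * hdiv

/-- The spatial Laplacian of a space-time function. -/
noncomputable def lapl (F : SpaceTime → ℝ) (q : SpaceTime) : ℝ :=
  ∑ j, dd (ex j) (dd (ex j) F) q

/-- The squared norm `∑ (∂ⱼuⁱ)²` of the spatial gradient. -/
noncomputable def gradSq (U : Fin 2 → SpaceTime → ℝ) (q : SpaceTime) : ℝ :=
  ∑ i, ∑ j, dd (ex j) (U i) q ^ 2

/-- The material derivative `∂ₜuⁱ + (u·∇)uⁱ`. -/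
noncomputable def material (U : Fin 2 → SpaceTime → ℝ) (i : Fin 2) (q : SpaceTime) : ℝ :=
  dd et (U i) q + ∑ k, U k q * dd (ex k) (U i) q

/-- The flux whose divergence accounts for all terms of `∂ₜ|∇u|²` that integrate to zero. -/
noncomputable def flux (U : Fin 2 → SpaceTime → ℝ) (P : SpaceTime → ℝ) (j : Fin 2)
    (q : SpaceTime) : ℝ :=
  2 * (∑ i, dd (ex j) (U i) q * material U i q) + 2 * (lapl (U j) q * P q)
    + (-1) * (U j q * gradSq U q)

section Enstrophy

variable {U : Fin 2 → SpaceTime → ℝ} {P : SpaceTime → ℝ}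

theorem SmoothPer.lapl {F : SpaceTime → ℝ} (hF : SmoothPer F) : SmoothPer (lapl F) :=
  .sum fun _ => (hF.dd _).dd _

theorem SmoothPer.gradSq (hU : ∀ i, SmoothPer (U i)) : SmoothPer (gradSq U) :=
  .sum fun i => .sum fun _ => ((hU i).dd _).sq

theorem SmoothPer.material (hU : ∀ i, SmoothPer (U i)) (i : Fin 2) : SmoothPer (material U i) :=
  ((hU i).dd _).add (.sum fun k => (hU k).mul ((hU i).dd _))

theorem SmoothPer.flux (hU : ∀ i, SmoothPer (U i)) (hP : SmoothPer P) (j : Fin 2) :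
    SmoothPer (flux U P j) :=
  (((SmoothPer.const 2).mul (.sum fun i => ((hU i).dd _).mul (.material hU i))).add
    ((SmoothPer.const 2).mul ((hU j).lapl.mul hP))).add
    ((SmoothPer.const (-1)).mul ((hU j).mul (.gradSq hU)))

theorem dd_gradSq (hU : ∀ i, SmoothPer (U i)) (v q : SpaceTime) :
    dd v (gradSq U) q
      = ∑ i, ∑ j, 2 * (dd (ex j) (U i) q * dd (ex j) (dd v (U i)) q) := by
  change dd v (fun q => ∑ i, ∑ j, dd (ex j) (U i) q ^ 2) q = _
  rw [dd_sum fun i => .sum fun j => ((hU i).dd _).sq]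
  refine Finset.sum_congr rfl fun i _ => ?_
  rw [dd_sum fun j => ((hU i).dd _).sq]
  refine Finset.sum_congr rfl fun j _ => ?_
  rw [dd_sq ((hU i).dd _), dd_comm (hU i)]

theorem dd_material (hU : ∀ i, SmoothPer (U i)) (i j : Fin 2) (q : SpaceTime) :
    dd (ex j) (material U i) q
      = dd (ex j) (dd et (U i)) q
        + ∑ k, (dd (ex j) (U k) q * dd (ex k) (U i) q
          + U k q * dd (ex j) (dd (ex k) (U i)) q) := by
  change dd (ex j) (fun q => dd et (U i) q + ∑ k, U k q * dd (ex k) (U i) q) q = _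
  rw [dd_add ((hU i).dd _) (.sum fun k => (hU k).mul ((hU i).dd _)),
    dd_sum fun k => (hU k).mul ((hU i).dd _)]
  congr 1
  refine Finset.sum_congr rfl fun k _ => ?_
  rw [dd_mul (hU k) ((hU i).dd _)]

theorem dd_flux (hU : ∀ i, SmoothPer (U i)) (hP : SmoothPer P) (j : Fin 2) (q : SpaceTime) :
    dd (ex j) (flux U P j) q
      = 2 * (∑ i, (dd (ex j) (dd (ex j) (U i)) q * material U i q
            + dd (ex j) (U i) q * dd (ex j) (material U i) q))
        + 2 * (dd (ex j) (lapl (U j)) q * P q + lapl (U j) q * dd (ex j) P q)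
        - (dd (ex j) (U j) q * gradSq U q + U j q * dd (ex j) (gradSq U) q) := by
  have hA : SmoothPer (fun q => ∑ i, dd (ex j) (U i) q * material U i q) :=
    .sum fun i => ((hU i).dd _).mul (.material hU i)
  have hB := (hU j).lapl.mul hP
  have hC := (hU j).mul (SmoothPer.gradSq hU)
  change dd (ex j) (fun q => 2 * (∑ i, dd (ex j) (U i) q * material U i q)
    + 2 * (lapl (U j) q * P q) + (-1) * (U j q * gradSq U q)) q = _
  rw [dd_add (((SmoothPer.const 2).mul hA).add ((SmoothPer.const 2).mul hB))
      ((SmoothPer.const (-1)).mul hC),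
    dd_add ((SmoothPer.const 2).mul hA) ((SmoothPer.const 2).mul hB),
    dd_mul (.const 2) hA, dd_mul (.const 2) hB, dd_mul (.const (-1)) hC,
    dd_mul (hU j).lapl hP, dd_mul (hU j) (.gradSq hU),
    dd_sum fun i => ((hU i).dd _).mul (.material hU i)]
  simp only [dd_const, dd_mul ((hU _).dd (ex j)) (SmoothPer.material hU _)]
  ring

/-- `div Δu = Δ div u = 0`. -/
theorem div_lapl (hU : ∀ i, SmoothPer (U i)) (hdiv : ∀ q, ∑ j, dd (ex j) (U j) q = 0)
    (q : SpaceTime) : ∑ j, dd (ex j) (lapl (U j)) q = 0 := by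
  have h1 : ∀ j, dd (ex j) (lapl (U j)) q
      = ∑ k, dd (ex k) (dd (ex k) (dd (ex j) (U j))) q := by
    intro j
    change dd (ex j) (fun q => ∑ k, dd (ex k) (dd (ex k) (U j)) q) q = _
    rw [dd_sum fun k => ((hU j).dd _).dd _]
    refine Finset.sum_congr rfl fun k _ => ?_
    rw [dd_comm ((hU j).dd _), dd_comm (hU j)]
  have h2 : ∀ k, dd (ex k) (fun q => ∑ j, dd (ex j) (U j) q)
      = fun q => ∑ j, dd (ex k) (dd (ex j) (U j)) q :=
    fun k => funext fun q => dd_sum (fun j => (hU j).dd _) _ q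
  have h3 : ∀ k, ∑ j, dd (ex k) (dd (ex k) (dd (ex j) (U j))) q = 0 := by
    intro k
    rw [← dd_sum (fun j => ((hU j).dd (ex j)).dd (ex k)), ← h2 k, funext hdiv]
    have h0 : dd (ex k) (fun _ => 0) = fun _ => 0 := funext fun q => dd_const 0 _ q
    rw [h0, h0]
  simp only [h1]
  rw [Finset.sum_comm]
  exact Finset.sum_eq_zero fun k _ => h3 k

/-- Pointwise enstrophy balance. The cubic term `∑ ∂ⱼuⁱ ∂ⱼuᵏ ∂ₖuⁱ` vanishes because a trace-free
`2 × 2` matrix `A` satisfies `A² = -det A • 1`, so `tr (A² Aᵀ) = 0`. -/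
theorem dt_gradSq (hU : ∀ i, SmoothPer (U i)) (hP : SmoothPer P)
    (hdiv : ∀ q, ∑ j, dd (ex j) (U j) q = 0) (q : SpaceTime) :
    dd et (gradSq U) q
      = (∑ j, dd (ex j) (flux U P j) q)
        - 2 * ∑ i, lapl (U i) q * (material U i q + dd (ex i) P q) := by
  have hL := div_lapl hU hdiv q
  have hd := hdiv q
  have hc0 := congrFun (dd_comm (hU 0) (ex 0) (ex 1)) q
  have hc1 := congrFun (dd_comm (hU 1) (ex 0) (ex 1)) q
  simp only [dd_flux hU hP, dd_gradSq hU, dd_material hU]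
  simp only [Fin.sum_univ_two] at hL hd ⊢
  have hl : ∀ i, lapl (U i) q
      = dd (ex 0) (dd (ex 0) (U i)) q + dd (ex 1) (dd (ex 1) (U i)) q :=
    fun i => by simp [lapl, Fin.sum_univ_two]
  have hg : gradSq U q = dd (ex 0) (U 0) q ^ 2 + dd (ex 1) (U 0) q ^ 2
      + (dd (ex 0) (U 1) q ^ 2 + dd (ex 1) (U 1) q ^ 2) := by
    simp [gradSq, Fin.sum_univ_two]
  rw [hl 0, hl 1, hg, hc0, hc1]
  have hd' : dd (ex 1) (U 1) q = - dd (ex 0) (U 0) q := by linarith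
  rw [hd']
  linear_combination (-2) * P q * hL

end Enstrophy

theorem stmt8
    (T ν : ℝ) (hT : 0 < T) (hν : 0 < ν)
    (u : ℝ → (Fin 2 → ℝ) → (Fin 2 → ℝ)) (θ p : ℝ → (Fin 2 → ℝ) → ℝ)
    (hu : ContDiff ℝ (⊤ : ℕ∞) (fun q : ℝ × (Fin 2 → ℝ) => u q.1 q.2))
    (hθ : ContDiff ℝ (⊤ : ℕ∞) (fun q : ℝ × (Fin 2 → ℝ) => θ q.1 q.2))
    (hp : ContDiff ℝ (⊤ : ℕ∞) (fun q : ℝ × (Fin 2 → ℝ) => p q.1 q.2))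
    (hup : ∀ t i, Periodic2 (fun x => u t x i))
    (hθp : ∀ t, Periodic2 (θ t)) (hpp : ∀ t, Periodic2 (p t))
    (hdiv : ∀ t x, ∑ j : Fin 2, pd j (fun y => u t y j) x = 0)
    (hmom : ∀ t ∈ Set.Icc (0 : ℝ) T, ∀ x, ∀ i : Fin 2,
      deriv (fun s => u s x i) t + ∑ j : Fin 2, u t x j * pd j (fun y => u t y i) x
        = ν * lap (fun y => u t y i) x - pd i (p t) x + θ t x * e2 i)
    (htheta : ∀ t ∈ Set.Icc (0 : ℝ) T, ∀ x,
      deriv (fun s => θ s x) t + ∑ j : Fin 2, u t x j * pd j (θ t) x = 0) :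
    ∀ t ∈ Set.Icc (0 : ℝ) T,
      (∫ x in Q2, ∑ i : Fin 2, ∑ j : Fin 2, (pd j (fun y => u t y i) x) ^ 2)
          + ν * ∫ s in (0 : ℝ)..t,
              (∫ x in Q2, ∑ i : Fin 2, (lap (fun y => u s y i) x) ^ 2)
        ≤ (∫ x in Q2, ∑ i : Fin 2, ∑ j : Fin 2, (pd j (fun y => u 0 y i) x) ^ 2)
            + (t / ν) * ∫ x in Q2, (θ 0 x) ^ 2 := by
  set U : Fin 2 → SpaceTime → ℝ := fun i q => u q.1 q.2 i with hUdef
  set Θ : SpaceTime → ℝ := fun q => θ q.1 q.2 with hΘdef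
  set P : SpaceTime → ℝ := fun q => p q.1 q.2 with hPdef
  have hU : ∀ i, SmoothPer (U i) := fun i => ⟨contDiff_pi.1 hu i, fun t => hup t i⟩
  have hΘ : SmoothPer Θ := ⟨hθ, hθp⟩
  have hP : SmoothPer P := ⟨hp, hpp⟩
  have epd : ∀ t i j x, pd j (fun y => u t y i) x = dd (ex j) (U i) (t, x) :=
    fun t i j x => pd_slice (hU i) j t x
  have elap : ∀ t i x, lap (fun y => u t y i) x = lapl (U i) (t, x) :=
    fun t i x => lap_slice (hU i) t x
  have epdp : ∀ t j x, pd j (p t) x = dd (ex j) P (t, x) := fun t j x => pd_slice hP j t x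
  have epdθ : ∀ t j x, pd j (θ t) x = dd (ex j) Θ (t, x) := fun t j x => pd_slice hΘ j t x
  have edu : ∀ t i x, deriv (fun s => u s x i) t = dd et (U i) (t, x) :=
    fun t i x => (hasDerivAt_time (hU i) t x).deriv
  have edθ : ∀ t x, deriv (fun s => θ s x) t = dd et Θ (t, x) :=
    fun t x => (hasDerivAt_time hΘ t x).deriv
  simp only [epd, elap, epdp, epdθ, edu, edθ] at hdiv hmom htheta ⊢
  have hdiv' : ∀ q, ∑ j, dd (ex j) (U j) q = 0 := fun q => hdiv q.1 q.2
  have hLsq : SmoothPer (fun q => ∑ i, lapl (U i) q ^ 2) := .sum fun i => (hU i).lapl.sq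
  have hcons : ∀ t ∈ Set.Icc (0 : ℝ) T,
      ∫ x in Q2, Θ (t, x) ^ 2 = ∫ x in Q2, Θ (0, x) ^ 2 := by
    intro t ht
    have h := integral_slice_sub hΘ.sq ht.1
    have hz : ∫ s in (0 : ℝ)..t, ∫ x in Q2, dd et (fun q => Θ q ^ 2) (s, x)
        = ∫ s in (0 : ℝ)..t, (0 : ℝ) := by
      refine intervalIntegral.integral_congr fun s hs => ?_
      rw [Set.uIcc_of_le ht.1] at hs
      have hs' : s ∈ Set.Icc (0 : ℝ) T := ⟨hs.1, hs.2.trans ht.2⟩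
      have e : ∀ x, dd et (fun q => Θ q ^ 2) (s, x)
          = ∑ j, dd (ex j) (fun q => (-1) * (U j q * Θ q ^ 2)) (s, x) :=
        fun x => dt_sq_eq_div hU hΘ (s, x) (hdiv' _) (htheta s hs' x)
      simp only [e]
      exact integral_div_eq_zero (G := fun j q => (-1) * (U j q * Θ q ^ 2))
        (fun j => (SmoothPer.const (-1)).mul ((hU j).mul hΘ.sq)) s
    rw [hz] at h
    simp only [intervalIntegral.integral_zero] at h
    linarith
  have hrate : ∀ s ∈ Set.Icc (0 : ℝ) T,
      ∫ x in Q2, dd et (gradSq U) (s, x)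
        ≤ -ν * (∫ x in Q2, ∑ i, lapl (U i) (s, x) ^ 2) + ν⁻¹ * ∫ x in Q2, Θ (0, x) ^ 2 := by
    intro s hs
    have hpt : ∀ x, dd et (gradSq U) (s, x)
        ≤ (∑ j, dd (ex j) (flux U P j) (s, x))
          + (-ν * (∑ i, lapl (U i) (s, x) ^ 2) + ν⁻¹ * Θ (s, x) ^ 2) := by
      intro x
      have hm : ∀ i, material U i (s, x) + dd (ex i) P (s, x)
          = ν * lapl (U i) (s, x) + Θ (s, x) * e2 i := by
        intro i
        have := hmom s hs x i
        simp only [material]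
        simp only [hUdef, hΘdef] at this ⊢
        linarith
      rw [dt_gradSq hU hP hdiv' (s, x)]
      simp only [hm]
      simp only [Fin.sum_univ_two, e2]
      -- Young's inequality `-2θL ≤ νL² + θ²/ν`, as a completed square.
      have hy : ν * lapl (U 1) (s, x) ^ 2 + 2 * (Θ (s, x) * lapl (U 1) (s, x))
          + ν⁻¹ * Θ (s, x) ^ 2 = ν⁻¹ * (ν * lapl (U 1) (s, x) + Θ (s, x)) ^ 2 := by
        field_simp
        ring
      have hy0 : 0 ≤ ν⁻¹ * (ν * lapl (U 1) (s, x) + Θ (s, x)) ^ 2 := by positivity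
      have hy1 : 0 ≤ ν * lapl (U 0) (s, x) ^ 2 := by positivity
      simp
      nlinarith
    have hi1 : IntegrableOn (fun x => ∑ j, dd (ex j) (flux U P j) (s, x)) Q2 :=
      integrableOn_Q2 (continuous_finsetSum _ fun j _ =>
        ((SmoothPer.flux hU hP j).dd _).continuous_slice s)
    have hi2 : IntegrableOn (fun x => -ν * (∑ i, lapl (U i) (s, x) ^ 2)) Q2 :=
      integrableOn_Q2 (continuous_const.mul (hLsq.continuous_slice s))
    have hi3 : IntegrableOn (fun x => ν⁻¹ * Θ (s, x) ^ 2) Q2 :=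
      integrableOn_Q2 (continuous_const.mul (hΘ.sq.continuous_slice s))
    have hi23 : IntegrableOn
        (fun x => -ν * (∑ i, lapl (U i) (s, x) ^ 2) + ν⁻¹ * Θ (s, x) ^ 2) Q2 := hi2.add hi3
    have hi123 : IntegrableOn (fun x => (∑ j, dd (ex j) (flux U P j) (s, x))
        + (-ν * (∑ i, lapl (U i) (s, x) ^ 2) + ν⁻¹ * Θ (s, x) ^ 2)) Q2 := hi1.add hi23
    calc ∫ x in Q2, dd et (gradSq U) (s, x)
        ≤ ∫ x in Q2, ((∑ j, dd (ex j) (flux U P j) (s, x))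
          + (-ν * (∑ i, lapl (U i) (s, x) ^ 2) + ν⁻¹ * Θ (s, x) ^ 2)) :=
          integral_mono (integrableOn_Q2 (((SmoothPer.gradSq hU).dd et).continuous_slice s))
            hi123 hpt
      _ = _ := by
          rw [integral_add hi1 hi23, integral_add hi2 hi3,
            integral_div_eq_zero (SmoothPer.flux hU hP), integral_const_mul, integral_const_mul,
            hcons s hs, zero_add]
  intro t ht
  have hE := integral_slice_sub (SmoothPer.gradSq hU) ht.1
  have hcL := continuous_integral_slice hLsq
  have hcνL : Continuous fun s => -ν * ∫ x in Q2, ∑ i, lapl (U i) (s, x) ^ 2 :=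
    continuous_const.mul hcL
  have hmono : ∫ s in (0 : ℝ)..t, ∫ x in Q2, dd et (gradSq U) (s, x)
      ≤ ∫ s in (0 : ℝ)..t, (-ν * (∫ x in Q2, ∑ i, lapl (U i) (s, x) ^ 2)
        + ν⁻¹ * ∫ x in Q2, Θ (0, x) ^ 2) :=
    intervalIntegral.integral_mono_on ht.1
      ((continuous_integral_slice ((SmoothPer.gradSq hU).dd et)).intervalIntegrable _ _)
      ((hcνL.add continuous_const).intervalIntegrable _ _)
      fun s hs => hrate s ⟨hs.1, hs.2.trans ht.2⟩
  rw [intervalIntegral.integral_add (hcνL.intervalIntegrable _ _)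
      (continuous_const.intervalIntegrable _ _), intervalIntegral.integral_const_mul,
    intervalIntegral.integral_const, smul_eq_mul, sub_zero] at hmono
  rw [← hE] at hmono
  simp only [gradSq] at hmono
  have hdivν : t / ν * ∫ x in Q2, θ 0 x ^ 2 = t * (ν⁻¹ * ∫ x in Q2, Θ (0, x) ^ 2) := by
    rw [div_eq_mul_inv, mul_assoc]
  rw [hdivν]
  linarith
end
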